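/- Let n, m ≥ 4 be integers and let G = P_n □ P_m be the grid. If b is an integer such that m/2 ≤ b ≤ m−1, then nb ∈ S_SC(G). -/

import Mathlib

/-!  Common definitions: oriented graphs, geodesic convexity, convexity number,
strong convexity spectrum, and grid graphs. -/

variable {V : Type*}

/-- A directed walk of length `k` from `u` to `v` along the arc relation `A`,
encoded by the function `f` listing its vertices. -/
def IsDirWalk (A : V → V → Prop) (k : ℕ) (f : ℕ → V) (u v : V) : Prop :=
  f 0 = u ∧ f k = v ∧ ∀ i, i < k → A (f i) (f (i + 1))

/-- There is a directed walk from `u` to `v`. -/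
def DirReachable (A : V → V → Prop) (u v : V) : Prop :=
  ∃ k f, IsDirWalk A k f u v

/-- A digraph (given by its arc relation) is strongly connected. -/
def StrongConnected (A : V → V → Prop) : Prop :=
  ∀ u v : V, DirReachable A u v

/-- A `uv`-geodesic: a directed walk from `u` to `v` of minimum possible length
(such a walk is automatically a directed path). -/
def IsGeodesic (A : V → V → Prop) (k : ℕ) (f : ℕ → V) (u v : V) : Prop :=
  IsDirWalk A k f u v ∧ ∀ k' f', IsDirWalk A k' f' u v → k ≤ k'

/-- A nonempty vertex set `C` is convex if every vertex lying on a geodesic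
between two vertices of `C` (in either direction) belongs to `C`. -/
def DConvex (A : V → V → Prop) (C : Set V) : Prop :=
  C.Nonempty ∧ ∀ u ∈ C, ∀ v ∈ C, ∀ k f, IsGeodesic A k f u v → ∀ i ≤ k, f i ∈ C

/-- `A` is an orientation of the simple graph `G`: every arc is along an edge,
every edge gets an arc, and no edge gets both directions. -/
def IsOrientation (G : SimpleGraph V) (A : V → V → Prop) : Prop :=
  (∀ x y, A x y → G.Adj x y) ∧ (∀ x y, G.Adj x y → A x y ∨ A y x) ∧
    (∀ x y, A x y → ¬ A y x)

/-- The convexity number of a digraph: the maximum cardinality of a proper convex set. -/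
noncomputable def convexityNumber [Fintype V] (A : V → V → Prop) : ℕ :=
  sSup {k | ∃ C : Set V, DConvex A C ∧ C ≠ Set.univ ∧ C.ncard = k}

/-- The strong convexity spectrum of a graph: the set of convexity numbers of
its strongly connected orientations. -/
def strongConvexitySpectrum [Fintype V] (G : SimpleGraph V) : Set ℕ :=
  {k | ∃ A : V → V → Prop, IsOrientation G A ∧ StrongConnected A ∧ convexityNumber A = k}

/-- The grid graph `P_n □ P_m`. -/
def gridGraph (n m : ℕ) : SimpleGraph (Fin n × Fin m) :=
  (SimpleGraph.pathGraph n).boxProd (SimpleGraph.pathGraph m)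

/-! The grid is cut after column `c` into a left and a right block. The boundary is oriented as a
directed cycle, every column is a directed path, and all rows are oriented so that a single arc,
the bridge `(0, c) → (0, c + 1)`, leads from the left block to the right one. A walk that leaves the
left block and comes back can be shortened by running down column `c`, so the left block is convex.
Conversely, a convex set meeting both blocks contains the bridge. The walk around the boundary from
the head of the bridge to its tail is a geodesic: in the left block, only the bottom row leads left,
so every way back to the tail runs down to that row, along it and up the first column. Hence such a
set contains the four corners, then the top and bottom rows, then all columns. As the left block is
at least half of the grid, it is a largest proper convex set. -/

section DirWalk

variable {A : V → V → Prop} {C S : Set V} {f g : ℕ → V} {k l : ℕ} {u v w : V}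

/-- There is a directed walk of length exactly `k` from `u` to `v`; lengths of walks are compared
without naming the vertices on them. -/
def HasDirWalk (A : V → V → Prop) (k : ℕ) (u v : V) : Prop :=
  ∃ f, IsDirWalk A k f u v

theorem IsDirWalk.append (hf : IsDirWalk A k f u v) (hg : IsDirWalk A l g v w) :
    IsDirWalk A (k + l) (fun i ↦ if i ≤ k then f i else g (i - k)) u w := by
  obtain ⟨f_zero, f_last, f_arc⟩ := hf
  obtain ⟨g_zero, g_last, g_arc⟩ := hg
  refine ⟨by simp [f_zero], by grind, fun i hi ↦ ?_⟩
  obtain h | rfl | h := lt_trichotomy i k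
  · simpa [h.le, Nat.succ_le_iff.mpr h] using f_arc i h
  · simpa [f_last, g_zero] using g_arc 0 (by omega)
  · simpa [h.not_ge, show ¬i + 1 ≤ k by omega, Nat.sub_add_comm h.le] using
      g_arc (i - k) (by omega)

theorem HasDirWalk.trans (h : HasDirWalk A k u v) (h' : HasDirWalk A l v w) :
    HasDirWalk A (k + l) u w := by
  obtain ⟨f, hf⟩ := h
  obtain ⟨g, hg⟩ := h'
  exact ⟨_, hf.append hg⟩

theorem DirReachable.trans (h : DirReachable A u v) (h' : DirReachable A v w) :
    DirReachable A u w := by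
  obtain ⟨k, hk⟩ := h
  obtain ⟨l, hl⟩ := h'
  exact ⟨k + l, HasDirWalk.trans hk hl⟩

theorem HasDirWalk.dirReachable (h : HasDirWalk A k u v) : DirReachable A u v :=
  ⟨k, h⟩

theorem IsDirWalk.hasDirWalk_segment (hf : IsDirWalk A k f u v) {a b : ℕ} (hab : a ≤ b)
    (hbk : b ≤ k) : HasDirWalk A (b - a) (f a) (f b) :=
  ⟨fun i ↦ f (a + i), rfl, by simp only [Nat.add_sub_cancel' hab],
    fun i hi ↦ hf.2.2 (a + i) (by omega)⟩

theorem IsDirWalk.exists_exit_arc (hf : IsDirWalk A k f u v) {a b : ℕ} (hab : a ≤ b)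
    (hbk : b ≤ k) (ha : f a ∈ C) (hb : f b ∉ C) :
    ∃ i, a ≤ i ∧ i < b ∧ f i ∈ C ∧ f (i + 1) ∉ C ∧ A (f i) (f (i + 1)) := by
  induction b, hab using Nat.le_induction with
  | base => exact absurd ha hb
  | succ b hab ih =>
    by_cases h : f b ∈ C
    · exact ⟨b, hab, b.lt_succ_self, h, hb, hf.2.2 b hbk⟩
    · obtain ⟨i, hai, hib, hi⟩ := ih (by omega) h
      exact ⟨i, hai, by omega, hi⟩

theorem HasDirWalk.le_add_of_potential (φ : V → ℕ) (hφ : ∀ x y, A x y → φ y ≤ φ x + 1)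
    (h : HasDirWalk A k u v) : φ v ≤ φ u + k := by
  obtain ⟨f, rfl, rfl, f_arc⟩ := h
  induction k with
  | zero => simp
  | succ k ih =>
    have hk := ih fun i hi ↦ f_arc i (by omega)
    have hstep := hφ _ _ (f_arc k k.lt_succ_self)
    omega

theorem DirReachable.exists_isGeodesic (h : DirReachable A u v) :
    ∃ k f, IsGeodesic A k f u v := by
  classical
  obtain ⟨f, hf⟩ := Nat.find_spec h
  exact ⟨Nat.find h, f, hf, fun k' f' hf' ↦ Nat.find_min' h ⟨f', hf'⟩⟩

theorem DConvex.mem_of_hasDirWalk (hS : DConvex A S) (hu : u ∈ S) (hw : w ∈ S)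
    (huv : HasDirWalk A k u v) (hvw : HasDirWalk A l v w)
    (hmin : ∀ r, HasDirWalk A r u w → k + l ≤ r) : v ∈ S := by
  obtain ⟨f, hf⟩ := huv
  obtain ⟨g, hg⟩ := hvw
  have hgeod : IsGeodesic A (k + l) _ u w := ⟨hf.append hg, fun r h hr ↦ hmin r ⟨h, hr⟩⟩
  simpa [hf.2.1] using hS.2 u hu w hw _ _ hgeod k (by omega)

theorem DConvex.exists_exit_arc (hA : StrongConnected A) (hS : DConvex A S) (hu : u ∈ S)
    (hv : v ∈ S) (huC : u ∈ C) (hvC : v ∉ C) :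
    ∃ x ∈ S, ∃ y ∈ S, x ∈ C ∧ y ∉ C ∧ A x y := by
  obtain ⟨k, f, hf⟩ := (hA u v).exists_isGeodesic
  obtain ⟨i, -, hik, hi⟩ := hf.1.exists_exit_arc (Nat.zero_le k) le_rfl
    (hf.1.1.symm ▸ huC) (hf.1.2.1.symm ▸ hvC)
  exact ⟨f i, hS.2 u hu v hv k f hf i hik.le, f (i + 1), hS.2 u hu v hv k f hf (i + 1) hik, hi⟩

theorem dConvex_of_shortcut (hne : C.Nonempty)
    (h : ∀ x x' y' y, x ∈ C → x' ∉ C → y' ∉ C → y ∈ C → A x x' → A y' y →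
      ∀ l, HasDirWalk A l x' y' → ∃ l' < l + 2, HasDirWalk A l' x y) :
    DConvex A C := by
  refine ⟨hne, fun u hu v hv k f ⟨hf, hmin⟩ a hak ↦ by_contra fun ha ↦ ?_⟩
  obtain ⟨p, -, hpa, hp, hp', p_arc⟩ :=
    hf.exists_exit_arc a.zero_le hak (hf.1.symm ▸ hu) ha
  obtain ⟨q, haq, hqk, hq, hq', q_arc⟩ :=
    hf.exists_exit_arc (C := Cᶜ) hak le_rfl ha (by simpa [hf.2.1] using hv)
  obtain ⟨l, hl, hpq⟩ := h _ _ _ _ hp hp' hq (by simpa using hq') p_arc q_arc _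
    (hf.hasDirWalk_segment (hpa.trans_le haq) hqk.le)
  have hup := hf.hasDirWalk_segment p.zero_le (by omega)
  have hqv := hf.hasDirWalk_segment hqk le_rfl
  obtain ⟨g, hg⟩ := (hup.trans hpq).trans hqv
  rw [hf.1, hf.2.1] at hg
  have := hmin _ g hg
  omega

theorem convexityNumber_eq_ncard [Fintype V] (hC : DConvex A C) (hCne : C ≠ Set.univ)
    (hcard : Fintype.card V ≤ 2 * C.ncard)
    (h : ∀ S, DConvex A S → ∀ u ∈ S, ∀ v ∈ S, u ∈ C → v ∉ C → S = Set.univ) :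
    convexityNumber A = C.ncard := by
  refine IsGreatest.csSup_eq ⟨⟨C, hC, hCne, rfl⟩, ?_⟩
  rintro _ ⟨S, hS, hSne, rfl⟩
  by_cases hSC : S ⊆ C
  · exact Set.ncard_le_ncard hSC
  · obtain ⟨v, hv, hvC⟩ := Set.not_subset.mp hSC
    have hdisj : S ⊆ Cᶜ := fun u hu huC ↦ hSne (h S hS u hu v hv huC hvC)
    have hle := Set.ncard_le_ncard hdisj
    have hcompl := Set.ncard_add_ncard_compl C
    rw [Nat.card_eq_fintype_card] at hcompl
    omega

theorem hasDirWalk_of_forall_succ {n : ℕ} {g : Fin n → V} {a b : Fin n} (hab : a ≤ b)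
    (h : ∀ s t : Fin n, a ≤ s → t ≤ b → (s : ℕ) + 1 = t → A (g s) (g t)) :
    HasDirWalk A (b - a) (g a) (g b) := by
  have hab' : (a : ℕ) ≤ b := hab
  refine ⟨fun i ↦ g ⟨min (a + i) b, by omega⟩, ?_, ?_, fun i hi ↦ h _ _ ?_ ?_ ?_⟩
  · simp [hab']
  · simp [hab']
  all_goals simp only [Fin.le_def]; omega

theorem hasDirWalk_of_forall_pred {n : ℕ} {g : Fin n → V} {a b : Fin n} (hab : a ≤ b)
    (h : ∀ s t : Fin n, a ≤ s → t ≤ b → (s : ℕ) + 1 = t → A (g t) (g s)) :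
    HasDirWalk A (b - a) (g b) (g a) := by
  have hab' : (a : ℕ) ≤ b := hab
  refine ⟨fun i ↦ g ⟨b - i, by omega⟩, rfl, ?_, fun i hi ↦ h _ _ ?_ ?_ ?_⟩
  · simp [Nat.sub_sub_self hab']
  all_goals simp only [Fin.le_def]; omega

end DirWalk

section GridOrientation

variable {n m k l : ℕ} {R : Fin n → Fin m → Prop} {D : Fin m → Prop} {i i' : Fin n} {j j' : Fin m}
  {x y z : Fin n × Fin m}

/-- The orientation of the grid in which the row edge from `(i, j)` to `(i, j + 1)` points to the
right if `R i j` and to the left otherwise, and column `j` points down if `D j` and up otherwise.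
Rows are numbered from top to bottom. The value of `R` at the last column is irrelevant. -/
def gridOrientation (R : Fin n → Fin m → Prop) (D : Fin m → Prop) (x y : Fin n × Fin m) : Prop :=
  x.1 = y.1 ∧ ((x.2 : ℕ) + 1 = y.2 ∧ R x.1 x.2 ∨ (y.2 : ℕ) + 1 = x.2 ∧ ¬R x.1 y.2) ∨
  x.2 = y.2 ∧ ((x.1 : ℕ) + 1 = y.1 ∧ D x.2 ∨ (y.1 : ℕ) + 1 = x.1 ∧ ¬D x.2)

theorem isOrientation_gridOrientation (R : Fin n → Fin m → Prop) (D : Fin m → Prop) :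
    IsOrientation (gridGraph n m) (gridOrientation R D) := by
  simp only [IsOrientation, gridGraph, SimpleGraph.boxProd_adj, SimpleGraph.pathGraph_adj,
    gridOrientation]
  refine ⟨fun x y h ↦ by tauto, ?_, ?_⟩
  · rintro ⟨i, j⟩ ⟨i', j'⟩ (⟨h, rfl : j = j'⟩ | ⟨h, rfl : i = i'⟩) <;> dsimp only at h ⊢ <;> tauto
  · rintro ⟨i, j⟩ ⟨i', j'⟩ (⟨rfl : i = i', h⟩ | ⟨rfl : j = j', h⟩) <;> grind

/-- The taxicab distance of the grid, a lower bound for the length of directed walks. -/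
def taxicabDist (x y : Fin n × Fin m) : ℕ :=
  Nat.dist x.1 y.1 + Nat.dist x.2 y.2

theorem HasDirWalk.taxicabDist_le (h : HasDirWalk (gridOrientation R D) k x y) :
    taxicabDist x y ≤ k := by
  have hφ : ∀ y z, gridOrientation R D y z → taxicabDist x z ≤ taxicabDist x y + 1 := by
    intro y z hyz
    simp only [gridOrientation, taxicabDist, Nat.dist] at hyz ⊢
    omega
  simpa [taxicabDist] using h.le_add_of_potential (taxicabDist x) hφ

theorem hasDirWalk_right (hjj : j ≤ j') (h : ∀ t, j ≤ t → t < j' → R i t) :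
    HasDirWalk (gridOrientation R D) (j' - j) (i, j) (i, j') :=
  hasDirWalk_of_forall_succ hjj fun s t hs ht hst ↦
    .inl ⟨rfl, .inl ⟨hst, h s hs (by omega)⟩⟩

theorem hasDirWalk_left (hjj : j' ≤ j) (h : ∀ t, j' ≤ t → t < j → ¬R i t) :
    HasDirWalk (gridOrientation R D) (j - j') (i, j) (i, j') :=
  hasDirWalk_of_forall_pred hjj fun s t hs ht hst ↦
    .inl ⟨rfl, .inr ⟨hst, h s hs (by omega)⟩⟩

theorem hasDirWalk_down (hii : i ≤ i') (h : D j) :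
    HasDirWalk (gridOrientation R D) (i' - i) (i, j) (i', j) :=
  hasDirWalk_of_forall_succ (g := (·, j)) hii fun _ _ _ _ hst ↦ .inr ⟨rfl, .inl ⟨hst, h⟩⟩

theorem hasDirWalk_up (hii : i' ≤ i) (h : ¬D j) :
    HasDirWalk (gridOrientation R D) (i - i') (i, j) (i', j) :=
  hasDirWalk_of_forall_pred (g := (·, j)) hii fun _ _ _ _ hst ↦ .inr ⟨rfl, .inr ⟨hst, h⟩⟩

theorem DConvex.mem_of_le_taxicabDist {S : Set (Fin n × Fin m)}
    (hS : DConvex (gridOrientation R D) S) (hx : x ∈ S) (hz : z ∈ S)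
    (hxy : HasDirWalk (gridOrientation R D) k x y) (hyz : HasDirWalk (gridOrientation R D) l y z)
    (hle : k + l ≤ taxicabDist x z) : y ∈ S :=
  hS.mem_of_hasDirWalk hx hz hxy hyz fun _ h ↦ hle.trans h.taxicabDist_le

theorem DConvex.mem_of_column {S : Set (Fin n × Fin m)} {t : Fin n}
    (hS : DConvex (gridOrientation R D) S) (hi : (i, j) ∈ S) (hi' : (i', j) ∈ S)
    (hit : i ≤ t) (hti : t ≤ i') : (t, j) ∈ S := by
  by_cases hD : D j
  · refine hS.mem_of_le_taxicabDist hi hi' (hasDirWalk_down hit hD) (hasDirWalk_down hti hD) ?_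
    simp only [taxicabDist, Nat.dist]
    omega
  · refine hS.mem_of_le_taxicabDist hi' hi (hasDirWalk_up hti hD) (hasDirWalk_up hit hD) ?_
    simp only [taxicabDist, Nat.dist]
    omega

end GridOrientation

section BoundaryCycle

variable {n m : ℕ} {R : Fin (n + 1) → Fin (m + 1) → Prop} {D : Fin (m + 1) → Prop}
  {S : Set (Fin (n + 1) × Fin (m + 1))} {j j' : Fin (m + 1)}

/-- The boundary of the grid is oriented as a clockwise directed cycle. -/
structure IsClockwise (R : Fin (n + 1) → Fin (m + 1) → Prop) (D : Fin (m + 1) → Prop) : Prop where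
  top : ∀ j, R 0 j
  right : D (Fin.last m)
  bottom : ∀ j, ¬R (Fin.last n) j
  left : ¬D 0

namespace IsClockwise

theorem hasDirWalk_top (h : IsClockwise R D) (hjj : j ≤ j') :
    HasDirWalk (gridOrientation R D) (j' - j) (0, j) (0, j') :=
  hasDirWalk_right hjj fun t _ _ ↦ h.top t

theorem hasDirWalk_bottom (h : IsClockwise R D) (hjj : j' ≤ j) :
    HasDirWalk (gridOrientation R D) (j - j') (Fin.last n, j) (Fin.last n, j') :=
  hasDirWalk_left hjj fun t _ _ ↦ h.bottom t

theorem hasDirWalk_right_side (h : IsClockwise R D) :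
    HasDirWalk (gridOrientation R D) n (0, Fin.last m) (Fin.last n, Fin.last m) :=
  hasDirWalk_down (Fin.last n).zero_le h.right

theorem hasDirWalk_left_side (h : IsClockwise R D) :
    HasDirWalk (gridOrientation R D) n (Fin.last n, 0) (0, 0) :=
  hasDirWalk_up (Fin.last n).zero_le h.left

theorem dirReachable_top_bottom (h : IsClockwise R D) (j j' : Fin (m + 1)) :
    DirReachable (gridOrientation R D) (0, j) (Fin.last n, j') :=
  (((h.hasDirWalk_top j.le_last).trans h.hasDirWalk_right_side).trans
    (h.hasDirWalk_bottom j'.le_last)).dirReachable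

theorem dirReachable_bottom_top (h : IsClockwise R D) (j j' : Fin (m + 1)) :
    DirReachable (gridOrientation R D) (Fin.last n, j) (0, j') :=
  (((h.hasDirWalk_bottom j.zero_le).trans h.hasDirWalk_left_side).trans
    (h.hasDirWalk_top j'.zero_le)).dirReachable

theorem strongConnected (h : IsClockwise R D) : StrongConnected (gridOrientation R D) := by
  have hfrom_top (j : Fin (m + 1)) (y) : DirReachable (gridOrientation R D) (0, j) y := by
    obtain ⟨i', j'⟩ := y
    by_cases hD : D j'
    · exact ((h.dirReachable_top_bottom j 0).trans (h.dirReachable_bottom_top 0 j')).trans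
        (hasDirWalk_down i'.zero_le hD).dirReachable
    · exact (h.dirReachable_top_bottom j j').trans (hasDirWalk_up i'.le_last hD).dirReachable
  rintro ⟨i, j⟩ y
  by_cases hD : D j
  · exact ((hasDirWalk_down i.le_last hD).dirReachable.trans
      (h.dirReachable_bottom_top j 0)).trans (hfrom_top 0 y)
  · exact (hasDirWalk_up i.zero_le hD).dirReachable.trans (hfrom_top j y)

theorem eq_univ_of_corners_mem (h : IsClockwise R D) (hS : DConvex (gridOrientation R D) S)
    (htl : (0, 0) ∈ S) (htr : (0, Fin.last m) ∈ S) (hbr : (Fin.last n, Fin.last m) ∈ S)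
    (hbl : (Fin.last n, 0) ∈ S) : S = Set.univ := by
  have htop (j : Fin (m + 1)) : (0, j) ∈ S :=
    hS.mem_of_le_taxicabDist htl htr (h.hasDirWalk_top j.zero_le) (h.hasDirWalk_top j.le_last)
      (by simp only [taxicabDist, Nat.dist, Fin.val_zero, Fin.val_last]; omega)
  have hbottom (j : Fin (m + 1)) : (Fin.last n, j) ∈ S :=
    hS.mem_of_le_taxicabDist hbr hbl (h.hasDirWalk_bottom j.le_last)
      (h.hasDirWalk_bottom j.zero_le)
      (by simp only [taxicabDist, Nat.dist, Fin.val_zero, Fin.val_last]; omega)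
  exact Set.eq_univ_of_forall fun ⟨i, j⟩ ↦
    hS.mem_of_column (htop j) (hbottom j) i.zero_le i.le_last

theorem eq_univ_of_boundary_geodesic (h : IsClockwise R D)
    (hS : DConvex (gridOrientation R D) S) {c : Fin m} (htail : (0, c.castSucc) ∈ S)
    (hhead : (0, c.succ) ∈ S)
    (hmin : ∀ r, HasDirWalk (gridOrientation R D) r (0, c.succ) (0, c.castSucc) →
      2 * (n + m) ≤ r + 1) : S = Set.univ := by
  have head_tr := h.hasDirWalk_top c.succ.le_last
  have tr_br := h.hasDirWalk_right_side
  have br_bl := h.hasDirWalk_bottom (Fin.last m).zero_le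
  have bl_tl := h.hasDirWalk_left_side
  have tl_tail := h.hasDirWalk_top c.castSucc.zero_le
  simp only [Fin.val_last, Fin.val_succ, Fin.val_castSucc, Fin.val_zero] at head_tr br_bl tl_tail
  have mem {k l : ℕ} {v} (hv : HasDirWalk (gridOrientation R D) k (0, c.succ) v)
      (hv' : HasDirWalk (gridOrientation R D) l v (0, c.castSucc))
      (hkl : k + l + 1 = 2 * (n + m)) : v ∈ S :=
    hS.mem_of_hasDirWalk hhead htail hv hv' fun r hr ↦ by have := hmin r hr; omega
  refine h.eq_univ_of_corners_mem hS
    (mem (((head_tr.trans tr_br).trans br_bl).trans bl_tl) tl_tail ?_)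
    (mem head_tr (((tr_br.trans br_bl).trans bl_tl).trans tl_tail) ?_)
    (mem (head_tr.trans tr_br) ((br_bl.trans bl_tl).trans tl_tail) ?_)
    (mem ((head_tr.trans tr_br).trans br_bl) (bl_tl.trans tl_tail) ?_) <;> omega

end IsClockwise

end BoundaryCycle

section Bridge

variable {n m : ℕ} {c : Fin m} {S : Set (Fin (n + 1) × Fin (m + 1))}
  {u v x y : Fin (n + 1) × Fin (m + 1)}

/-- The row edges pointing to the right in the orientation with a bridge after column `c`: all those
of the top row, and those inside the left block of the inner rows. -/
def BridgeRow (n : ℕ) (c : Fin m) (i : Fin (n + 1)) (j : Fin (m + 1)) : Prop :=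
  (i : ℕ) = 0 ∨ (i : ℕ) ≠ n ∧ (j : ℕ) < c

/-- The columns pointing down in the orientation with a bridge after column `c`: the last column,
and all columns of the left block but the first one. -/
def BridgeCol (c : Fin m) (j : Fin (m + 1)) : Prop :=
  (j : ℕ) ≠ 0 ∧ ((j : ℕ) ≤ c ∨ (j : ℕ) = m)

/-- The orientation of the grid in which the columns `0, …, c` form a convex left block, left only
through the bridge `(0, c) → (0, c + 1)`. -/
abbrev bridgeOrientation (n : ℕ) (c : Fin m) :
    Fin (n + 1) × Fin (m + 1) → Fin (n + 1) × Fin (m + 1) → Prop :=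
  gridOrientation (BridgeRow n c) (BridgeCol c)

/-- The vertices in the columns `0, …, c`. -/
def leftBlock (n : ℕ) (c : Fin m) : Set (Fin (n + 1) × Fin (m + 1)) :=
  Set.univ ×ˢ Set.Iic c.castSucc

/-- The length of a shortest walk from the head `(0, c + 1)` of the bridge to `x`, in closed form.
It serves as a potential bounding from below the length of walks from head to tail. -/
def bridgeDepth (c : Fin m) (x : Fin (n + 1) × Fin (m + 1)) : ℕ :=
  if (x.1 : ℕ) = 0 ∧ (c : ℕ) < x.2 then x.2 - (c + 1)
  else if (x.1 : ℕ) ≠ 0 ∧ ((c : ℕ) ≤ x.2 ∨ (x.1 : ℕ) = n) then m - (c + 1) + x.1 + (m - x.2)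
  else m - (c + 1) + n + m + (n - x.1) + x.2

theorem isClockwise_bridge (hn : 0 < n) : IsClockwise (BridgeRow n c) (BridgeCol c) where
  top _ := .inl rfl
  right := ⟨c.pos.ne', .inr rfl⟩
  bottom _ h := h.elim hn.ne' fun h ↦ h.1 rfl
  left h := h.1 rfl

theorem mem_leftBlock : x ∈ leftBlock n c ↔ (x.2 : ℕ) ≤ c := by
  simp [leftBlock, Fin.le_def]

theorem ncard_leftBlock (n : ℕ) (c : Fin m) : (leftBlock n c).ncard = (n + 1) * (c + 1) := by
  simp [leftBlock, Set.ncard_eq_toFinset_card']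

theorem exit_arc_leftBlock (h : bridgeOrientation n c x y)
    (hx : x ∈ leftBlock n c) (hy : y ∉ leftBlock n c) :
    x = (0, c.castSucc) ∧ y = (0, c.succ) := by
  obtain ⟨i, j⟩ := x
  obtain ⟨i', j'⟩ := y
  simp only [gridOrientation, BridgeRow, BridgeCol, mem_leftBlock] at h hx hy
  simp only [Prod.mk.injEq, Fin.ext_iff, Fin.val_zero, Fin.val_castSucc, Fin.val_succ]
  omega

theorem bridgeDepth_le_add_one (hc : 0 < (c : ℕ)) (x y : Fin (n + 1) × Fin (m + 1))
    (h : bridgeOrientation n c x y) : bridgeDepth c y ≤ bridgeDepth c x + 1 := by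
  obtain ⟨i, j⟩ := x
  obtain ⟨i', j'⟩ := y
  simp only [gridOrientation, BridgeRow, BridgeCol, bridgeDepth] at h ⊢
  split_ifs <;> omega

theorem boundary_length_le_of_hasDirWalk (hc : 0 < (c : ℕ)) (r : ℕ)
    (h : HasDirWalk (bridgeOrientation n c) r (0, c.succ) (0, c.castSucc)) :
    2 * (n + m) ≤ r + 1 := by
  have hdepth := h.le_add_of_potential (bridgeDepth c) (bridgeDepth_le_add_one hc)
  have hhead : bridgeDepth (n := n) c (0, c.succ) = 0 := by simp [bridgeDepth]
  have htail : bridgeDepth (n := n) c (0, c.castSucc) + 1 = 2 * (n + m) := by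
    rw [bridgeDepth, if_neg (by simp), if_neg (by simp)]
    simp only [Fin.val_zero, Fin.val_castSucc]
    omega
  omega

theorem dConvex_leftBlock (hc : 0 < (c : ℕ)) : DConvex (bridgeOrientation n c) (leftBlock n c) := by
  refine dConvex_of_shortcut ⟨(0, 0), by simp [leftBlock]⟩ ?_
  rintro x x' ⟨i, j⟩ ⟨i', j'⟩ hx hx' hy' hy hout hin l hl
  obtain ⟨rfl, rfl⟩ := exit_arc_leftBlock hout hx hx'
  obtain ⟨rfl, rfl⟩ : i = i' ∧ j' = c.castSucc := by
    simp only [gridOrientation, mem_leftBlock] at hin hy hy'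
    simp only [Fin.ext_iff, Fin.val_castSucc]
    omega
  refine ⟨i, ?_, hasDirWalk_down i.zero_le ⟨hc.ne', .inl le_rfl⟩⟩
  have hil := hl.taxicabDist_le
  simp only [taxicabDist, Nat.dist, Fin.val_zero] at hil
  omega

theorem eq_univ_of_mem_leftBlock (hn : 0 < n) (hc : 0 < (c : ℕ))
    (hS : DConvex (bridgeOrientation n c) S) (hu : u ∈ S) (hv : v ∈ S)
    (hul : u ∈ leftBlock n c) (hvl : v ∉ leftBlock n c) : S = Set.univ := by
  obtain ⟨x, hx, y, hy, hxl, hyl, hxy⟩ :=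
    hS.exists_exit_arc (isClockwise_bridge hn).strongConnected hu hv hul hvl
  obtain ⟨rfl, rfl⟩ := exit_arc_leftBlock hxy hxl hyl
  exact (isClockwise_bridge hn).eq_univ_of_boundary_geodesic hS hx hy
    (boundary_length_le_of_hasDirWalk hc)

theorem convexityNumber_bridgeOrientation (hn : 0 < n) (hc : 0 < (c : ℕ))
    (hcm : m + 1 ≤ 2 * (c + 1)) :
    convexityNumber (bridgeOrientation n c) = (n + 1) * (c + 1) := by
  rw [← ncard_leftBlock]
  refine convexityNumber_eq_ncard (dConvex_leftBlock hc) ?_ ?_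
    fun S hS u hu v hv ↦ eq_univ_of_mem_leftBlock hn hc hS hu hv
  · exact fun h ↦ by simpa [leftBlock] using h.symm.subset (Set.mem_univ (0, c.succ))
  · rw [ncard_leftBlock, Fintype.card_prod, Fintype.card_fin, Fintype.card_fin, mul_left_comm]
    exact Nat.mul_le_mul_left _ hcm

end Bridge

theorem nb_mem_strongConvexitySpectrum_grid_general (n m : ℕ) (hn : 2 ≤ n) (hm : 3 ≤ m)
    (b : ℕ) (hbl : m ≤ 2 * b) (hbu : b ≤ m - 1) :
    n * b ∈ strongConvexitySpectrum (gridGraph n m) := by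
  obtain ⟨n, rfl⟩ := Nat.exists_eq_add_of_le' (show 1 ≤ n by omega)
  obtain ⟨m, rfl⟩ := Nat.exists_eq_add_of_le' (show 1 ≤ m by omega)
  obtain ⟨c, rfl⟩ := Nat.exists_eq_add_of_le' (show 1 ≤ b by omega)
  let c : Fin m := ⟨c, hbu⟩
  have hn : 0 < n := by omega
  have hc : 0 < (c : ℕ) := by dsimp only [c]; omega
  exact ⟨bridgeOrientation n c, isOrientation_gridOrientation _ _,
    (isClockwise_bridge hn).strongConnected, convexityNumber_bridgeOrientation hn hc hbl⟩

/-- Realizable values `nb` in the strong convexity spectrum of `P_n □ P_m`,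
for `m/2 ≤ b ≤ m - 1`. -/
theorem nb_mem_strongConvexitySpectrum_grid (n m : ℕ) (hn : 4 ≤ n) (hm : 4 ≤ m)
    (b : ℕ) (hbl : m ≤ 2 * b) (hbu : b ≤ m - 1) :
    n * b ∈ strongConvexitySpectrum (gridGraph n m) :=
  nb_mem_strongConvexitySpectrum_grid_general n m (by omega) (by omega) b hbl hbu
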